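/- In the multiple-link price-anticipating mechanism, the unique Nash equilibrium is the all-zero profile (P°, B°) with p°_{mℓ} = 0 and β°_{mℓ} = 0 for all m = 1,…,M and ℓ = 1,…,L: this profile is a Nash equilibrium, and every Nash equilibrium equals it. Hence even with multiple competing links the market collapses with zero participation. -/

import Mathlib

open Finset

/-- User `m`'s pay-off in the multi-link price-anticipating mechanism:
`U(Σ_ℓ p_{mℓ}/μ_{mℓ}) − Σ_ℓ p_{mℓ}` with `μ_{mℓ} = (λ_ℓ + √(λ_ℓ² + 4 p_{mℓ}/β_{mℓ}))/2`. -/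
noncomputable def mlUserPayoff (M L : ℕ) (U : ℝ → ℝ) (lam : Fin L → ℝ)
    (P B : Fin M → Fin L → ℝ) (m : Fin M) : ℝ :=
  U (∑ ℓ, P m ℓ /
      ((lam ℓ + Real.sqrt ((lam ℓ) ^ 2 + 4 * P m ℓ / B m ℓ)) / 2)) - ∑ ℓ, P m ℓ

/-- Link `ℓ`'s pay-off in the multi-link price-anticipating mechanism. -/
noncomputable def mlLinkPayoff (M L : ℕ) (V : ℝ → ℝ) (Cℓ lamℓ : ℝ)
    (P B : Fin M → Fin L → ℝ) (ℓ : Fin L) : ℝ :=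
  if (∑ i, Real.sqrt (P i ℓ * B i ℓ)) ≤ Cℓ then
    -V (∑ i, Real.sqrt (P i ℓ * B i ℓ)) + ∑ i, P i ℓ
  else
    -V Cℓ + ∑ i, (1 / B i ℓ) *
      (2 * P i ℓ / (lamℓ + Real.sqrt (lamℓ ^ 2 + 4 * P i ℓ / B i ℓ))) ^ 2

/-- Replace column `ℓ` of the bid matrix `B` by `β`. -/
def updateCol (M L : ℕ) (B : Fin M → Fin L → ℝ) (ℓ : Fin L) (β : Fin M → ℝ) :
    Fin M → Fin L → ℝ :=
  fun i ℓ' => if ℓ' = ℓ then β i else B i ℓ'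

theorem aux_le {p b l : ℝ} (hp : 0 ≤ p) (hb : 0 ≤ b) (hl : 0 < l) :
    (1 / b) * (2 * p / (l + Real.sqrt (l ^ 2 + 4 * p / b))) ^ 2 ≤ p := by
  rcases hb.eq_or_lt with rfl | hb
  · simpa using hp
  have h4 : 0 ≤ 4 * p / b := by positivity
  have hs := Real.sq_sqrt (show 0 ≤ l ^ 2 + 4 * p / b by positivity)
  have hsn := Real.sqrt_nonneg (l ^ 2 + 4 * p / b)
  set s := Real.sqrt (l ^ 2 + 4 * p / b)
  have hD : 4 * p / b ≤ (l + s) ^ 2 := by nlinarith [mul_nonneg hl.le hsn, sq_nonneg l]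
  have hD' : 4 * p ≤ (l + s) ^ 2 * b := by rwa [div_le_iff₀ hb] at hD
  rw [div_pow, one_div, ← div_eq_inv_mul, div_div, div_le_iff₀ (by positivity)]
  nlinarith [mul_le_mul_of_nonneg_left hD' hp]

theorem aux_U {U : ℝ → ℝ} {c b : ℝ} (hd : DifferentiableAt ℝ U 0) (h0 : 0 < deriv U 0)
    (hc : 0 < c) (hb : 0 < b) :
    ∃ x, 0 < x ∧ x ≤ c ∧ U 0 < U x - x ^ 2 / b := by
  have ht := hd.hasDerivAt.tendsto_slope
  have h1 : ∀ᶠ x in nhdsWithin (0:ℝ) (Set.Ioi 0), deriv U 0 / 2 < slope U 0 x :=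
    (ht.eventually (lt_mem_nhds (by linarith))).filter_mono
      (nhdsWithin_mono _ (fun x hx => ne_of_gt hx))
  have h2 : ∀ᶠ x in nhdsWithin (0:ℝ) (Set.Ioi 0), x ∈ Set.Ioo (0:ℝ) (min c (deriv U 0 / 2 * b)) :=
    Ioo_mem_nhdsGT (by positivity)
  obtain ⟨x, hx1, hx0, hx2⟩ := (h1.and h2).exists
  refine ⟨x, hx0, (hx2.trans_le (min_le_left _ _)).le, ?_⟩
  have hx3 : x < deriv U 0 / 2 * b := hx2.trans_le (min_le_right _ _)
  rw [slope_def_field, sub_zero, lt_div_iff₀ hx0] at hx1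
  have : x ^ 2 / b < deriv U 0 / 2 * x := by
    rw [div_lt_iff₀ hb]; nlinarith
  linarith

/-- Multi-link price-anticipating scenario: the unique Nash
equilibrium is the all-zero profile.  The all-zero bid matrices form a Nash
equilibrium, and every Nash equilibrium has `p_{mℓ} = 0` and `β_{mℓ} = 0` for all
`m, ℓ`: the market collapses with zero participation. -/
theorem statement15
    (M L : ℕ) (hM : 0 < M) (hL : 0 < L)
    (C : Fin L → ℝ) (hC : ∀ ℓ, 0 < C ℓ)
    (U : Fin M → ℝ → ℝ) (V : Fin L → ℝ → ℝ)
    (hUconc : ∀ m, ConcaveOn ℝ (Set.Ici 0) (U m))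
    (hUmono : ∀ m, StrictMonoOn (U m) (Set.Ici 0))
    (hUdiff : ∀ m, ∀ x ∈ Set.Ici (0:ℝ), DifferentiableAt ℝ (U m) x)
    (hUderivcont : ∀ m, ContinuousOn (deriv (U m)) (Set.Ici 0))
    (hUderiv0 : ∀ m, 0 < deriv (U m) 0)
    (hVconv : ∀ ℓ, StrictConvexOn ℝ (Set.Ici 0) (V ℓ))
    (hVmono : ∀ ℓ, StrictMonoOn (V ℓ) (Set.Ici 0))
    (hVdiff : ∀ ℓ, ∀ x ∈ Set.Ici (0:ℝ), DifferentiableAt ℝ (V ℓ) x)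
    (hVderivcont : ∀ ℓ, ContinuousOn (deriv (V ℓ)) (Set.Ici 0))
    (lamFn : (Fin M → Fin L → ℝ) → (Fin M → Fin L → ℝ) → Fin L → ℝ)
    (hlamFn : ∀ P B : Fin M → Fin L → ℝ,
      (∀ m ℓ, 0 ≤ P m ℓ) → (∀ m ℓ, 0 ≤ B m ℓ) → ∀ ℓ,
      ((∑ i, Real.sqrt (P i ℓ * B i ℓ)) ≤ C ℓ → lamFn P B ℓ = 0) ∧
      (¬ (∑ i, Real.sqrt (P i ℓ * B i ℓ)) ≤ C ℓ →
        0 < lamFn P B ℓ ∧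
        (∑ i, 2 * P i ℓ /
          (lamFn P B ℓ +
            Real.sqrt ((lamFn P B ℓ) ^ 2 + 4 * P i ℓ / B i ℓ))) = C ℓ)) :
    -- the all-zero profile is a Nash equilibrium …
    ((∀ m : Fin M, ∀ q : Fin L → ℝ, (∀ ℓ, 0 ≤ q ℓ) →
        mlUserPayoff M L (U m)
          (lamFn (Function.update (fun _ _ => (0:ℝ)) m q) (fun _ _ => (0:ℝ)))
          (Function.update (fun _ _ => (0:ℝ)) m q) (fun _ _ => (0:ℝ)) m ≤
        mlUserPayoff M L (U m)
          (lamFn (fun _ _ => (0:ℝ)) (fun _ _ => (0:ℝ)))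
          (fun _ _ => (0:ℝ)) (fun _ _ => (0:ℝ)) m) ∧
     (∀ ℓ : Fin L, ∀ β : Fin M → ℝ, (∀ i, 0 ≤ β i) →
        mlLinkPayoff M L (V ℓ) (C ℓ)
          (lamFn (fun _ _ => (0:ℝ)) (updateCol M L (fun _ _ => (0:ℝ)) ℓ β) ℓ)
          (fun _ _ => (0:ℝ)) (updateCol M L (fun _ _ => (0:ℝ)) ℓ β) ℓ ≤
        mlLinkPayoff M L (V ℓ) (C ℓ)
          (lamFn (fun _ _ => (0:ℝ)) (fun _ _ => (0:ℝ)) ℓ)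
          (fun _ _ => (0:ℝ)) (fun _ _ => (0:ℝ)) ℓ)) ∧
    -- … and every Nash equilibrium is the all-zero profile
    (∀ P B : Fin M → Fin L → ℝ,
      (∀ m ℓ, 0 ≤ P m ℓ) → (∀ m ℓ, 0 ≤ B m ℓ) →
      (∀ m : Fin M, ∀ q : Fin L → ℝ, (∀ ℓ, 0 ≤ q ℓ) →
        mlUserPayoff M L (U m) (lamFn (Function.update P m q) B)
          (Function.update P m q) B m ≤
        mlUserPayoff M L (U m) (lamFn P B) P B m) →
      (∀ ℓ : Fin L, ∀ β : Fin M → ℝ, (∀ i, 0 ≤ β i) →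
        mlLinkPayoff M L (V ℓ) (C ℓ)
          (lamFn P (updateCol M L B ℓ β) ℓ) P (updateCol M L B ℓ β) ℓ ≤
        mlLinkPayoff M L (V ℓ) (C ℓ) (lamFn P B ℓ) P B ℓ) →
      (∀ m ℓ, P m ℓ = 0 ∧ B m ℓ = 0)) := by
  constructor
  · constructor
    · intro m q hq
      have h1 := fun ℓ => (hlamFn (Function.update (fun _ _ => (0:ℝ)) m q) (fun _ _ => (0:ℝ))
        (by
          intro m' ℓ
          by_cases h : m' = m
          · subst h; simpa using hq ℓ
          · simp [Function.update_of_ne h]) (by simp) ℓ).1 (by simpa using (hC ℓ).le)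
      have := Finset.sum_nonneg (fun ℓ (_ : ℓ ∈ Finset.univ) => hq ℓ)
      simp [mlUserPayoff, h1, this]
    · intro ℓ β hβ
      simp [mlLinkPayoff, (hC ℓ).le]
  · intro P B hP hB hu hl
    -- no trade on any link
    have key : ∀ ℓ, (∑ i, Real.sqrt (P i ℓ * B i ℓ)) = 0 := by
      intro ℓ
      have h0 := hl ℓ (fun _ => 0) (by simp)
      have hz : mlLinkPayoff M L (V ℓ) (C ℓ) (lamFn P (updateCol M L B ℓ fun _ => 0) ℓ) P
          (updateCol M L B ℓ fun _ => 0) ℓ = -V ℓ 0 + ∑ i, P i ℓ := by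
        simp [mlLinkPayoff, updateCol, (hC ℓ).le]
      rw [hz] at h0
      have hs0 : 0 ≤ ∑ i, Real.sqrt (P i ℓ * B i ℓ) :=
        Finset.sum_nonneg (fun i _ => Real.sqrt_nonneg _)
      unfold mlLinkPayoff at h0
      split_ifs at h0 with hc
      · by_contra hne
        have hpos := lt_of_le_of_ne hs0 (Ne.symm hne)
        have := hVmono ℓ (Set.mem_Ici.2 le_rfl) (Set.mem_Ici.2 hs0) hpos
        linarith
      · exfalso
        have hV := hVmono ℓ (Set.mem_Ici.2 le_rfl) (Set.mem_Ici.2 (hC ℓ).le) (hC ℓ)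
        have hlam := ((hlamFn P B hP hB ℓ).2 hc).1
        have hle : ∑ i, (1 / B i ℓ) * (2 * P i ℓ / (lamFn P B ℓ +
            Real.sqrt (lamFn P B ℓ ^ 2 + 4 * P i ℓ / B i ℓ))) ^ 2 ≤ ∑ i, P i ℓ := by
          apply Finset.sum_le_sum
          intro i _
          exact aux_le (hP i ℓ) (hB i ℓ) hlam
        linarith
    have hPB : ∀ m ℓ, P m ℓ = 0 ∨ B m ℓ = 0 := by
      intro m ℓ
      have h := (Finset.sum_eq_zero_iff_of_nonneg
        (fun i _ => Real.sqrt_nonneg (P i ℓ * B i ℓ))).1 (key ℓ) m (Finset.mem_univ _)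
      rw [Real.sqrt_eq_zero (mul_nonneg (hP m ℓ) (hB m ℓ))] at h
      exact mul_eq_zero.1 h
    have hlam0 : ∀ ℓ, lamFn P B ℓ = 0 := fun ℓ =>
      (hlamFn P B hP hB ℓ).1 (by rw [key]; exact (hC ℓ).le)
    have hpay : ∀ m, mlUserPayoff M L (U m) (lamFn P B) P B m = U m 0 - ∑ ℓ, P m ℓ := by
      intro m
      unfold mlUserPayoff
      congr 2
      apply Finset.sum_eq_zero
      intro ℓ _
      rcases hPB m ℓ with h | h <;> simp [h, hlam0]
    have hP0 : ∀ m ℓ, P m ℓ = 0 := by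
      intro m ℓ
      have h := hu m (fun _ => 0) (by simp)
      rw [hpay] at h
      have hz : mlUserPayoff M L (U m) (lamFn (Function.update P m fun _ => 0) B)
          (Function.update P m fun _ => 0) B m = U m 0 := by
        simp [mlUserPayoff]
      rw [hz] at h
      have h2 : ∑ ℓ, P m ℓ = 0 :=
        le_antisymm (by linarith) (Finset.sum_nonneg (fun ℓ _ => hP m ℓ))
      exact (Finset.sum_eq_zero_iff_of_nonneg (fun ℓ _ => hP m ℓ)).1 h2 ℓ (Finset.mem_univ _)
    intro m ℓ
    refine ⟨hP0 m ℓ, ?_⟩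
    by_contra hne
    have hb : 0 < B m ℓ := lt_of_le_of_ne (hB m ℓ) (Ne.symm hne)
    obtain ⟨x, hx0, hxC, hxU⟩ := aux_U (hUdiff m 0 (Set.mem_Ici.2 le_rfl)) (hUderiv0 m) (hC ℓ) hb
    have hq0 : 0 ≤ x ^ 2 / B m ℓ := by positivity
    have hPeq : P = fun _ _ => 0 := by
      funext a b; exact hP0 a b
    set q : Fin L → ℝ := fun ℓ' => if ℓ' = ℓ then x ^ 2 / B m ℓ else 0 with hq
    have hqn : ∀ ℓ', 0 ≤ q ℓ' := by
      intro ℓ'; simp only [hq]; split_ifs <;> simp [hq0]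
    have h := hu m q hqn
    have hlq : ∀ ℓ', lamFn (Function.update P m q) B ℓ' = 0 := by
      intro ℓ'
      refine (hlamFn _ B ?_ hB ℓ').1 ?_
      · intro a b
        by_cases hh : a = m
        · subst hh; simpa using hqn b
        · simp [Function.update_of_ne hh, hP]
      · rw [Finset.sum_eq_single m]
        · rw [Function.update_self]
          by_cases hh : ℓ' = ℓ
          · subst hh
            have : q ℓ' * B m ℓ' = x ^ 2 := by simp only [hq, if_true]; field_simp
            rw [this, Real.sqrt_sq hx0.le]; exact hxC
          · simp [hq, hh, (hC ℓ').le]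
        · intro a _ hh
          simp [Function.update_of_ne hh, hP0]
        · simp
    rw [hpay] at h
    unfold mlUserPayoff at h
    simp only [Function.update_self, hlq, hP0, Finset.sum_const_zero, sub_zero] at h
    rw [Finset.sum_eq_single ℓ, Finset.sum_eq_single ℓ] at h
    · have e1 : q ℓ = x ^ 2 / B m ℓ := by simp [hq]
      have e2 : (0:ℝ) ^ 2 + 4 * (x ^ 2 / B m ℓ) / B m ℓ = (2 * x / B m ℓ) ^ 2 := by
        field_simp; ring
      rw [e1, e2, Real.sqrt_sq (by positivity)] at h
      have e3 : x ^ 2 / B m ℓ / ((0 + 2 * x / B m ℓ) / 2) = x := by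
        field_simp; ring
      rw [e3] at h
      linarith
    · intro b _ hh; simp [hq, hh]
    · simp
    · intro b _ hh; simp [hq, hh]
    · simp
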